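/- For every real x and every real t, ∑_{n=0}^∞ (t^n/n!) ₕH_n(x) = e^{x t} · ₕe(t²), i.e. the exponential generating function of the harmonic Hermite polynomials is e^{xt} times the harmonic based exponential function evaluated at t². -/

import Mathlib

open Real MeasureTheory

/-- The `n`-th harmonic number `h_n = ∑_{r=1}^n 1/r`. -/
noncomputable def harm (n : ℕ) : ℝ := ∑ r ∈ Finset.range n, 1 / (r + 1 : ℝ)

/-- `h₀* = 1` and `h_r* = h_r` for `r ≥ 1`. -/
noncomputable def hstar (n : ℕ) : ℝ := if n = 0 then 1 else harm n

/-- The harmonic based exponential function `ₕe(x) = 1 + ∑_{n=1}^∞ h_n x^n / n!`. -/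
noncomputable def he (x : ℝ) : ℝ :=
  1 + ∑' n : ℕ, harm (n + 1) * x ^ (n + 1) / (Nat.factorial (n + 1) : ℝ)

/-- The `n`-th harmonic Hermite polynomial
`ₕH_n(x) = n! ∑_{r=0}^{⌊n/2⌋} h_r* x^{n-2r} / ((n-2r)! r!)`. -/
noncomputable def hH (n : ℕ) (x : ℝ) : ℝ :=
  (Nat.factorial n : ℝ) * ∑ r ∈ Finset.range (n / 2 + 1),
    hstar r * x ^ (n - 2 * r) / ((Nat.factorial (n - 2 * r) : ℝ) * (Nat.factorial r : ℝ))

/-!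
Put `a_r = h_r* t^{2r} / r!` and `b_m = (xt)^m / m!`. Dividing out `n!`, the `n`-th term of the
generating function is the sum of `a_r b_m` over all `(r, m)` with `2r + m = n`. It is therefore
the `n`-th term of the Cauchy product of `∑ b_m = e^{xt}` with the series `∑ a_r = ₕe(t²)`, whose
terms are spread out over the even indices. The rearrangement is legitimate because
`h_r* ≤ 2^r` makes `∑ a_r` absolutely convergent.
-/

section StridedCauchyProduct

open Finset Function

variable {d : ℕ}

theorem sum_range_extend_mul_left_mul {R : Type*} [NonUnitalNonAssocSemiring R] (hd : 0 < d)
    (f g : ℕ → R) (n : ℕ) :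
    ∑ k ∈ range (n + 1), extend (d * ·) f 0 k * g (n - k) =
      ∑ r ∈ range (n / d + 1), f r * g (n - d * r) := by
  have hinj : Injective (d * ·) := mul_right_injective₀ hd.ne'
  have mem_range_iff (r : ℕ) : r ∈ range (n / d + 1) ↔ d * r ∈ range (n + 1) := by
    rw [mem_range_succ_iff, mem_range_succ_iff, Nat.le_div_iff_mul_le hd, mul_comm]
  refine (sum_of_injOn (d * ·) hinj.injOn (fun r hr ↦ (mem_range_iff r).1 hr) ?_ ?_).symm
  · intro k hk hk'
    have not_multiple : ¬∃ r, d * r = k := by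
      rintro ⟨r, rfl⟩
      exact hk' ⟨r, (mem_range_iff r).2 hk, rfl⟩
    rw [extend_apply' _ _ _ not_multiple, Pi.zero_apply, zero_mul]
  · intro r _
    rw [hinj.extend_apply]

theorem hasSum_sum_range_div_mul_of_summable_norm {R : Type*} [NormedRing R] [CompleteSpace R]
    (hd : 0 < d) {f g : ℕ → R} (hf : Summable fun r ↦ ‖f r‖) (hg : Summable fun m ↦ ‖g m‖) :
    HasSum (fun n ↦ ∑ r ∈ range (n / d + 1), f r * g (n - d * r))
      ((∑' r, f r) * ∑' m, g m) := by
  have hinj : Injective (d * ·) := mul_right_injective₀ hd.ne'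
  have hf_extend : Summable fun k ↦ ‖extend (d * ·) f 0 k‖ := by
    refine (hinj.summable_iff fun k hk ↦ ?_).1 ?_
    · rw [extend_apply' _ _ _ hk, Pi.zero_apply, norm_zero]
    · simpa only [comp_def, hinj.extend_apply] using hf
  simpa only [sum_range_extend_mul_left_mul hd, tsum_extend_zero hinj] using
    hasSum_sum_range_mul_of_summable_norm hf_extend hg

end StridedCauchyProduct

section WeightedGouldHopper

open Finset Nat

/-- The weighted Gould–Hopper polynomial
`n! ∑_{r=0}^{⌊n/d⌋} a_r x^{n-dr} / ((n-dr)! r!)`. The Hermite family is `d = 2`; the harmonic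
Hermite polynomials have weights `a = hstar`. -/
noncomputable def weightedGouldHopper {𝕜 : Type*} [Field 𝕜] (d : ℕ) (a : ℕ → 𝕜) (n : ℕ)
    (x : 𝕜) : 𝕜 :=
  (n ! : 𝕜) * ∑ r ∈ range (n / d + 1), a r * x ^ (n - d * r) / (((n - d * r)! : 𝕜) * (r ! : 𝕜))

theorem pow_div_factorial_mul_weightedGouldHopper {𝕜 : Type*} [Field 𝕜] [CharZero 𝕜] (d : ℕ)
    (a : ℕ → 𝕜) (n : ℕ) (x t : 𝕜) :
    t ^ n / (n ! : 𝕜) * weightedGouldHopper d a n x =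
      ∑ r ∈ range (n / d + 1),
        a r * (t ^ d) ^ r / (r ! : 𝕜) * ((x * t) ^ (n - d * r) / ((n - d * r)! : 𝕜)) := by
  have hn : (n ! : 𝕜) ≠ 0 := Nat.cast_ne_zero.2 n.factorial_ne_zero
  rw [weightedGouldHopper, ← mul_assoc, div_mul_cancel₀ _ hn, mul_sum]
  refine sum_congr rfl fun r hr ↦ ?_
  have hrn : d * r ≤ n :=
    (Nat.mul_le_mul_left d (mem_range_succ_iff.1 hr)).trans (Nat.mul_div_le n d)
  have t_pow : t ^ n = (t ^ d) ^ r * t ^ (n - d * r) := by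
    rw [← pow_mul, ← pow_add, Nat.add_sub_cancel' hrn]
  rw [t_pow, mul_pow]
  ring

theorem hasSum_pow_div_factorial_mul_weightedGouldHopper {𝕜 : Type*} [NormedField 𝕜]
    [NormedAlgebra ℚ 𝕜] [CompleteSpace 𝕜] {d : ℕ} (hd : 0 < d) {a : ℕ → 𝕜} {t : 𝕜}
    (ha : Summable fun r ↦ ‖a r * (t ^ d) ^ r / (r ! : 𝕜)‖) (x : 𝕜) :
    HasSum (fun n ↦ t ^ n / (n ! : 𝕜) * weightedGouldHopper d a n x)
      (NormedSpace.exp (x * t) * ∑' r, a r * (t ^ d) ^ r / (r ! : 𝕜)) := by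
  have : CharZero 𝕜 := algebraRat.charZero 𝕜
  simp only [pow_div_factorial_mul_weightedGouldHopper]
  rw [mul_comm (NormedSpace.exp _), ← (NormedSpace.expSeries_div_hasSum_exp (x * t)).tsum_eq]
  exact hasSum_sum_range_div_mul_of_summable_norm (g := fun m ↦ (x * t) ^ m / (m ! : 𝕜)) hd ha
    (NormedSpace.norm_expSeries_div_summable (x * t))

end WeightedGouldHopper

section HarmonicExponential

open Finset Nat

theorem harm_nonneg (n : ℕ) : 0 ≤ harm n :=
  sum_nonneg fun r _ ↦ by positivity

theorem harm_le_self (n : ℕ) : harm n ≤ n := by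
  have term_le_one (r : ℕ) : 1 / (r + 1 : ℝ) ≤ 1 :=
    div_le_self zero_le_one (le_add_of_nonneg_left r.cast_nonneg)
  simpa [harm] using sum_le_card_nsmul (range n) _ 1 fun r _ ↦ term_le_one r

theorem hstar_nonneg (n : ℕ) : 0 ≤ hstar n := by
  unfold hstar
  split_ifs
  · exact zero_le_one
  · exact harm_nonneg n

theorem hstar_le_two_pow (n : ℕ) : hstar n ≤ 2 ^ n := by
  unfold hstar
  split_ifs
  · exact one_le_pow₀ one_le_two
  · exact (harm_le_self n).trans (mod_cast n.lt_two_pow_self.le)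

theorem summable_norm_hstar_mul_pow_div_factorial (y : ℝ) :
    Summable fun r : ℕ ↦ ‖hstar r * y ^ r / (r ! : ℝ)‖ := by
  refine (Real.summable_pow_div_factorial (2 * |y|)).of_nonneg_of_le
    (fun _ ↦ norm_nonneg _) fun r ↦ ?_
  calc ‖hstar r * y ^ r / (r ! : ℝ)‖
    _ = hstar r * |y| ^ r / (r ! : ℝ) := by
      simp only [norm_div, norm_mul, norm_pow, Real.norm_of_nonneg (hstar_nonneg r),
        Real.norm_eq_abs, Nat.abs_cast]
    _ ≤ 2 ^ r * |y| ^ r / (r ! : ℝ) := by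
      gcongr
      exact hstar_le_two_pow r
    _ = (2 * |y|) ^ r / (r ! : ℝ) := by rw [mul_pow]

theorem he_eq_tsum (y : ℝ) : he y = ∑' r : ℕ, hstar r * y ^ r / (r ! : ℝ) := by
  rw [(summable_norm_hstar_mul_pow_div_factorial y).of_norm.tsum_eq_zero_add]
  simp [he, hstar]

end HarmonicExponential

theorem hH_eq_weightedGouldHopper (n : ℕ) (x : ℝ) : hH n x = weightedGouldHopper 2 hstar n x :=
  rfl

/-- `∑_{n=0}^∞ (t^n/n!) ₕH_n(x) = e^{xt} ₕe(t²)`. -/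
theorem hH_generating_function (x t : ℝ) :
    (∑' n : ℕ, t ^ n / (Nat.factorial n : ℝ) * hH n x) =
      Real.exp (x * t) * he (t ^ 2) := by
  simp only [hH_eq_weightedGouldHopper]
  rw [he_eq_tsum, Real.exp_eq_exp_ℝ]
  exact (hasSum_pow_div_factorial_mul_weightedGouldHopper two_pos
    (summable_norm_hstar_mul_pow_div_factorial (t ^ 2)) x).tsum_eq
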